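/- Let |M| = |W| = 3 and let ψ be the uniform distribution over the (3!)^6 preference profiles in which every agent ranks being unmatched last (i.e., each agent's ranking of the three agents on the other side is an independent uniform permutation). Then no mechanism φ is interim stable at ψ. -/

import Mathlib

open scoped ENNReal

namespace Unraveling

variable (M W : Type*) [Fintype M] [DecidableEq M] [Fintype W] [DecidableEq W]

/-- A matching between men `M` and women `W`.  `Sum.inl m` denotes man `m`,
`Sum.inr w` denotes woman `w`; `toFun a = a` means agent `a` is unmatched. -/
structure Matching where
  toFun : M ⊕ W → M ⊕ W
  man_range : ∀ m : M, toFun (Sum.inl m) = Sum.inl m ∨ ∃ w : W, toFun (Sum.inl m) = Sum.inr w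
  woman_range : ∀ w : W, toFun (Sum.inr w) = Sum.inr w ∨ ∃ m : M, toFun (Sum.inr w) = Sum.inl m
  mutual_cond : ∀ (m : M) (w : W), toFun (Sum.inl m) = Sum.inr w ↔ toFun (Sum.inr w) = Sum.inl m

/-- A preference profile: each man has a ranking (a bijection onto `{1,…,|W|+1}`,
encoded as an `Equiv` onto `Fin (|W|+1)`) of the women together with the option
(`none`) of remaining unmatched, and symmetrically for women. -/
structure Profile where
  mpref : M → (Option W ≃ Fin (Fintype.card W + 1))
  wpref : W → (Option M ≃ Fin (Fintype.card M + 1))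

variable {M W}

/-- The partner of man `m` under matching `μ` (`none` if unmatched). -/
def Matching.partnerM (μ : Matching M W) (m : M) : Option W :=
  match μ.toFun (Sum.inl m) with
  | Sum.inl _ => none
  | Sum.inr w => some w

/-- The partner of woman `w` under matching `μ` (`none` if unmatched). -/
def Matching.partnerW (μ : Matching M W) (w : W) : Option M :=
  match μ.toFun (Sum.inr w) with
  | Sum.inr _ => none
  | Sum.inl m => some m

/-- The rank (`1` = most preferred) that man `m` assigns to `o` under profile `P`. -/
def mrank (P : Profile M W) (m : M) (o : Option W) : ℕ := (P.mpref m o : ℕ) + 1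

/-- The rank (`1` = most preferred) that woman `w` assigns to `o` under profile `P`. -/
def wrank (P : Profile M W) (w : W) (o : Option M) : ℕ := (P.wpref w o : ℕ) + 1

/-- The rank that agent `a` assigns to his/her partner under matching `μ`. -/
def prank (P : Profile M W) (μ : Matching M W) : M ⊕ W → ℕ
  | Sum.inl m => mrank P m (μ.partnerM m)
  | Sum.inr w => wrank P w (μ.partnerW w)

/-- The rank that agent `a` assigns to remaining unmatched. -/
def urank (P : Profile M W) : M ⊕ W → ℕ
  | Sum.inl m => mrank P m none
  | Sum.inr w => wrank P w none

/-- Stability of a matching at a profile. -/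
def IsStable (P : Profile M W) (μ : Matching M W) : Prop :=
  (∀ a : M ⊕ W, prank P μ a ≤ urank P a) ∧
  (∀ (m : M) (w : W), mrank P m (some w) < prank P μ (Sum.inl m) →
     prank P μ (Sum.inr w) < wrank P w (some m))

/-- A mechanism maps each preference profile to a probability distribution over matchings. -/
abbrev Mechanism (M W : Type*) [Fintype M] [DecidableEq M] [Fintype W] [DecidableEq W] :=
  Profile M W → PMF (Matching M W)

/-- The probability that `p` assigns to the set `s`. -/
noncomputable def prob {α : Type*} (p : PMF α) (s : Set α) : ℝ≥0∞ :=
  ∑' x, s.indicator (fun y => p y) x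

/-- CDF of the rank that agent `a` assigns to his/her random partner, when the
matching is drawn from `p` and the profile is `P`. -/
noncomputable def cdfAt (P : Profile M W) (p : PMF (Matching M W)) (a : M ⊕ W) (n : ℕ) : ℝ≥0∞ :=
  prob p {μ | prank P μ a ≤ n}

/-- `SD F G` : the rank distribution with CDF `F` strictly first-order
stochastically dominates the one with CDF `G`. -/
def SD (F G : ℕ → ℝ≥0∞) : Prop := (∀ n, G n ≤ F n) ∧ ∃ n, G n < F n

/-- A coalition consisting of at most one man and at most one woman. -/
def IsPairCoalition (A' : Set (M ⊕ W)) : Prop :=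
  {m : M | Sum.inl m ∈ A'}.Subsingleton ∧ {w : W | Sum.inr w ∈ A'}.Subsingleton

/-- Coalition `A'` blocks mechanism `φ` ex-post at profile `P`. -/
def BlocksExPost (A' : Set (M ⊕ W)) (φ : Mechanism M W) (P : Profile M W) : Prop :=
  A'.Nonempty ∧ ∃ φ' : Mechanism M W,
    (∀ a ∈ A', prob (φ' P) {μ | μ.toFun a ∈ A'} = 1) ∧
    (∀ a ∈ A', SD (cdfAt P (φ' P) a) (cdfAt P (φ P) a))

def ExPostStable (φ : Mechanism M W) : Prop :=
  ∀ (P : Profile M W) (A' : Set (M ⊕ W)), ¬ BlocksExPost A' φ P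

def ExPostPairwiseStable (φ : Mechanism M W) : Prop :=
  ∀ (P : Profile M W) (A' : Set (M ⊕ W)), IsPairCoalition A' → ¬ BlocksExPost A' φ P

/-- Ex-ante CDF of the rank of agent `a`'s partner under mechanism `φ`, when
the profile is drawn from prior `ψ`. -/
noncomputable def cdfExAnte (ψ : PMF (Profile M W)) (φ : Mechanism M W) (a : M ⊕ W) (n : ℕ) : ℝ≥0∞ :=
  ∑' P, ψ P * cdfAt P (φ P) a n

/-- Coalition `A'` blocks mechanism `φ` ex-ante at prior `ψ`. -/
def BlocksExAnte (A' : Set (M ⊕ W)) (φ : Mechanism M W) (ψ : PMF (Profile M W)) : Prop :=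
  A'.Nonempty ∧ ∃ φ' : Mechanism M W,
    (∀ a ∈ A', (∑' P, ψ P * prob (φ' P) {μ | μ.toFun a ∈ A'}) = 1) ∧
    (∀ a ∈ A', SD (cdfExAnte ψ φ' a) (cdfExAnte ψ φ a))

def ExAnteStableAt (φ : Mechanism M W) (ψ : PMF (Profile M W)) : Prop :=
  ∀ A' : Set (M ⊕ W), ¬ BlocksExAnte A' φ ψ

def ExAnteStable (φ : Mechanism M W) : Prop := ∀ ψ, ExAnteStableAt φ ψ

def ExAntePairwiseStable (φ : Mechanism M W) : Prop :=
  ∀ (ψ : PMF (Profile M W)) (A' : Set (M ⊕ W)), IsPairCoalition A' → ¬ BlocksExAnte A' φ ψ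

/-- `prefEq P P' a` : profiles `P` and `P'` give agent `a` the same preferences. -/
def prefEq (P P' : Profile M W) : M ⊕ W → Prop
  | Sum.inl m => P.mpref m = P'.mpref m
  | Sum.inr w => P.wpref w = P'.wpref w

/-- The event `Y_a(P̃_a)`: profiles in which `a`'s preferences agree with `Pt`
and every other member of the coalition `A'` has preferences in his/her
acceptance set `R`. -/
def interimEvent (A' : Set (M ⊕ W)) (R : (M ⊕ W) → Set (Profile M W)) (a : M ⊕ W)
    (Pt : Profile M W) : Set (Profile M W) :=
  {P | prefEq P Pt a ∧ ∀ a' ∈ A', a' ≠ a → P ∈ R a'}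

/-- CDF of the rank of `a`'s partner under `φ`, with the profile drawn from `ψ`
conditioned on the event `Y`. -/
noncomputable def cdfCond (ψ : PMF (Profile M W)) (Y : Set (Profile M W)) (φ : Mechanism M W)
    (a : M ⊕ W) (n : ℕ) : ℝ≥0∞ :=
  (∑' P, Y.indicator (fun P' => ψ P' * cdfAt P' (φ P') a n) P) / prob ψ Y

/-- Coalition `A'` blocks mechanism `φ` in the interim at prior `ψ`.  Each `R a`
is the set of profiles in which `a`'s preferences are ones at which `a` agrees to
deviate; it is required to depend only on `a`'s own preferences. -/
def BlocksInterim (A' : Set (M ⊕ W)) (φ : Mechanism M W) (ψ : PMF (Profile M W)) : Prop :=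
  A'.Nonempty ∧ ∃ (φ' : Mechanism M W) (R : (M ⊕ W) → Set (Profile M W)),
    (∀ (a : M ⊕ W) (P P' : Profile M W), prefEq P P' a → (P ∈ R a ↔ P' ∈ R a)) ∧
    (∀ a ∈ A', ∀ P : Profile M W, prob (φ' P) {μ | μ.toFun a ∈ A'} = 1) ∧
    (∀ a ∈ A', ∀ Pt : Profile M W,
      Pt ∈ R a ↔ (0 < prob ψ (interimEvent A' R a Pt) ∧
        SD (cdfCond ψ (interimEvent A' R a Pt) φ' a)
           (cdfCond ψ (interimEvent A' R a Pt) φ a))) ∧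
    0 < prob ψ {P | ∀ a ∈ A', P ∈ R a}

def InterimStableAt (φ : Mechanism M W) (ψ : PMF (Profile M W)) : Prop :=
  ∀ A' : Set (M ⊕ W), ¬ BlocksInterim A' φ ψ

def InterimStable (φ : Mechanism M W) : Prop := ∀ ψ, InterimStableAt φ ψ

def InterimPairwiseStable (φ : Mechanism M W) : Prop :=
  ∀ (ψ : PMF (Profile M W)) (A' : Set (M ⊕ W)), IsPairCoalition A' → ¬ BlocksInterim A' φ ψ

/-- `MRanks P m rw ru` : man `m` assigns rank `rw w` to each woman `w` and
rank `ru` to remaining unmatched. -/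
def MRanks (P : Profile M W) (m : M) (rw : W → ℕ) (ru : ℕ) : Prop :=
  (∀ w, mrank P m (some w) = rw w) ∧ mrank P m none = ru

/-- `WRanks P w rm ru` : woman `w` assigns rank `rm m` to each man `m` and
rank `ru` to remaining unmatched. -/
def WRanks (P : Profile M W) (w : W) (rm : M → ℕ) (ru : ℕ) : Prop :=
  (∀ m, wrank P w (some m) = rm m) ∧ wrank P w none = ru

instance (P : Profile M W) (m : M) (rw : W → ℕ) (ru : ℕ) : Decidable (MRanks P m rw ru) :=
  decidable_of_iff ((∀ w, mrank P m (some w) = rw w) ∧ mrank P m none = ru) Iff.rfl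

instance (P : Profile M W) (w : W) (rm : M → ℕ) (ru : ℕ) : Decidable (WRanks P w rm ru) :=
  decidable_of_iff ((∀ m, wrank P w (some m) = rm m) ∧ wrank P w none = ru) Iff.rfl

/-- The perfect matching induced by a bijection `e : M ≃ W`. -/
def matchingOf (e : M ≃ W) : Matching M W where
  toFun a :=
    match a with
    | Sum.inl m => Sum.inr (e m)
    | Sum.inr w => Sum.inl (e.symm w)
  man_range m := Or.inr ⟨e m, rfl⟩
  woman_range w := Or.inr ⟨e.symm w, rfl⟩
  mutual_cond m w := by
    constructor
    · intro h
      simp only [Sum.inr.injEq] at h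
      simp [← h]
    · intro h
      simp only [Sum.inl.injEq] at h
      simp [← h]

/-- `P'` is the permutation of profile `P` obtained by (`σM`, `σW`):
`P_a(a') = P'_{σ(a)}(σ(a'))` for all agents `a` and all `a'` in the domain of `P_a`. -/
def IsPermutedProfile (σM : Equiv.Perm M) (σW : Equiv.Perm W) (P P' : Profile M W) : Prop :=
  (∀ m w, P'.mpref (σM m) (some (σW w)) = P.mpref m (some w)) ∧
  (∀ m, P'.mpref (σM m) none = P.mpref m none) ∧
  (∀ w m, P'.wpref (σW w) (some (σM m)) = P.wpref w (some m)) ∧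
  (∀ w, P'.wpref (σW w) none = P.wpref w none)

/-- Probability (jointly over the profile drawn from `ψ` and the internal
randomization of `φ`) that agent `a` is assigned a partner of rank exactly `k`. -/
noncomputable def probRankEq (ψ : PMF (Profile M W)) (φ : Mechanism M W) (a : M ⊕ W) (k : ℕ) : ℝ≥0∞ :=
  ∑' P, ψ P * prob (φ P) {μ | prank P μ a = k}

/-- CDF of a distribution on ranks `{1,2,3}` with probabilities `q1`, `q2`, `q3`. -/
def cdf3 (q1 q2 q3 : ℝ) (n : ℕ) : ℝ :=
  (if 1 ≤ n then q1 else 0) + (if 2 ≤ n then q2 else 0) + (if 3 ≤ n then q3 else 0)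

/-- Strict first-order stochastic dominance for real-valued rank CDFs. -/
def SDR (F G : ℕ → ℝ) : Prop := (∀ n, G n ≤ F n) ∧ ∃ n, G n < F n

end Unraveling

namespace Unraveling

section helpers

set_option linter.unusedSectionVars false

variable {M W : Type*} [Fintype M] [DecidableEq M] [Fintype W] [DecidableEq W]

lemma prob_eq {α : Type*} (p : PMF α) (s : Set α) : prob p s = p.toOuterMeasure s := by
  rw [PMF.toOuterMeasure_apply]; rfl

lemma prob_le_one {α : Type*} (p : PMF α) (s : Set α) : prob p s ≤ 1 := by
  rw [prob_eq, PMF.toOuterMeasure_apply, ← p.tsum_coe]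
  exact ENNReal.tsum_le_tsum fun x => Set.indicator_le_self _ _ _

lemma prob_eq_one_iff {α : Type*} (p : PMF α) (s : Set α) : prob p s = 1 ↔ p.support ⊆ s := by
  rw [prob_eq, PMF.toOuterMeasure_apply_eq_one_iff]

lemma prob_eq_zero {α : Type*} (p : PMF α) (s : Set α) (h : ∀ x ∈ p.support, x ∉ s) :
    prob p s = 0 := by
  rw [prob_eq, PMF.toOuterMeasure_apply_eq_zero_iff, Set.disjoint_left]
  exact h

lemma prob_pos_iff {α : Type*} (p : PMF α) (s : Set α) : 0 < prob p s ↔ ∃ x ∈ s, p x ≠ 0 := by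
  rw [prob_eq, pos_iff_ne_zero, Ne, PMF.toOuterMeasure_apply_eq_zero_iff, Set.not_disjoint_iff]
  constructor
  · rintro ⟨x, h1, h2⟩
    exact ⟨x, h2, (p.mem_support_iff x).1 h1⟩
  · rintro ⟨x, h1, h2⟩
    exact ⟨x, (p.mem_support_iff x).2 h2, h1⟩

lemma prob_pure {α : Type*} (x : α) (s : Set α) (h : x ∈ s) : prob (PMF.pure x) s = 1 := by
  rw [prob_eq_one_iff, PMF.support_pure]; simpa using h

lemma prob_pure_not {α : Type*} (x : α) (s : Set α) (h : x ∉ s) : prob (PMF.pure x) s = 0 := by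
  apply prob_eq_zero
  intro y hy
  rw [PMF.support_pure] at hy
  have : y = x := by simpa using hy
  rwa [this]

/-- the numerator of `cdfCond` -/
noncomputable def numer (ψ : PMF (Profile M W)) (Y : Set (Profile M W)) (φ : Mechanism M W)
    (a : M ⊕ W) (n : ℕ) : ℝ≥0∞ :=
  ∑' P, Y.indicator (fun P' => ψ P' * cdfAt P' (φ P') a n) P

lemma numer_ne_top (ψ : PMF (Profile M W)) (Y : Set (Profile M W)) (φ : Mechanism M W)
    (a : M ⊕ W) (n : ℕ) : numer ψ Y φ a n ≠ ⊤ := by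
  refine ne_top_of_le_ne_top (b := 1) (by simp) ?_
  rw [← ψ.tsum_coe]
  refine ENNReal.tsum_le_tsum fun P => (Set.indicator_le_self _ _ _).trans ?_
  exact mul_le_of_le_one_right' (prob_le_one _ _)

lemma SD_of_numer (ψ : PMF (Profile M W)) (Y : Set (Profile M W)) (φ φ' : Mechanism M W)
    (a : M ⊕ W) (hY : 0 < prob ψ Y) (h1 : ∀ n, numer ψ Y φ a n ≤ numer ψ Y φ' a n)
    (n : ℕ) (h2 : numer ψ Y φ a n < numer ψ Y φ' a n) :
    SD (cdfCond ψ Y φ' a) (cdfCond ψ Y φ a) := by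
  refine ⟨fun k => ENNReal.div_le_div_right (h1 k) _, n, ?_⟩
  exact ENNReal.div_lt_div_right hY.ne' (ne_top_of_le_ne_top (by simp) (prob_le_one _ _)) h2

lemma prank_pos (P : Profile M W) (μ : Matching M W) (a : M ⊕ W) : 1 ≤ prank P μ a := by
  cases a <;> simp [prank, mrank, wrank]

lemma prank_le (hM : Fintype.card M = 3) (hW : Fintype.card W = 3)
    (P : Profile M W) (μ : Matching M W) (a : M ⊕ W) : prank P μ a ≤ 4 := by
  cases a with
  | inl m =>
    have := (P.mpref m (μ.partnerM m)).isLt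
    simp only [prank, mrank]; omega
  | inr w =>
    have := (P.wpref w (μ.partnerW w)).isLt
    simp only [prank, wrank]; omega

lemma cdfAt_zero (P : Profile M W) (p : PMF (Matching M W)) (a : M ⊕ W) : cdfAt P p a 0 = 0 := by
  apply prob_eq_zero
  intro μ _ h
  have := prank_pos P μ a
  simp only [Set.mem_ofPred_eq] at h
  omega

/-- the empty matching -/
def emptyMatching : Matching M W where
  toFun a := a
  man_range m := Or.inl rfl
  woman_range w := Or.inl rfl
  mutual_cond m w := by simp

/-- the matching with a single pair -/
def pairMatching (m : M) (w : W) : Matching M W where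
  toFun a :=
    match a with
    | Sum.inl m' => if m' = m then Sum.inr w else Sum.inl m'
    | Sum.inr w' => if w' = w then Sum.inl m else Sum.inr w'
  man_range m' := by by_cases h : m' = m <;> simp [h]
  woman_range w' := by by_cases h : w' = w <;> simp [h]
  mutual_cond m' w' := by
    by_cases h : m' = m <;> by_cases h' : w' = w <;> simp [h, h', Ne.symm, eq_comm]

lemma partner_iff (μ : Matching M W) (m : M) (w : W) :
    μ.partnerM m = some w ↔ μ.partnerW w = some m := by
  have h := μ.mutual_cond m w
  unfold Matching.partnerM Matching.partnerW
  rcases μ.man_range m with h1 | ⟨w', h1⟩ <;> rcases μ.woman_range w with h2 | ⟨m', h2⟩ <;>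
    rw [h1, h2] at h <;> rw [h1, h2] <;> simp_all

lemma prefEq_urank {P P' : Profile M W} {a : M ⊕ W} (h : prefEq P P' a) :
    urank P a = urank P' a := by
  cases a <;> simp_all [prefEq, urank, mrank, wrank]

lemma prefEq_refl (P : Profile M W) (a : M ⊕ W) : prefEq P P a := by
  cases a <;> rfl

lemma prefEq_symm {P P' : Profile M W} {a : M ⊕ W} (h : prefEq P P' a) : prefEq P' P a := by
  cases a <;> exact Eq.symm h

lemma prefEq_trans {P P' P'' : Profile M W} {a : M ⊕ W} (h : prefEq P P' a)
    (h' : prefEq P' P'' a) : prefEq P P'' a := by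
  cases a <;> exact Eq.trans h h'

lemma prefEq_prank {P P' : Profile M W} {a : M ⊕ W} (h : prefEq P P' a) (μ : Matching M W) :
    prank P μ a = prank P' μ a := by
  cases a <;> simp_all [prefEq, prank, mrank, wrank]

open Classical in
/-- Mutual first choices are matched for sure by an interim stable mechanism. -/
lemma toptop (hM : Fintype.card M = 3) (hW : Fintype.card W = 3)
    (ψ : PMF (Profile M W)) (hψ : ∀ P, ψ P ≠ 0 ↔ ∀ a : M ⊕ W, urank P a = 4)
    (φ : Mechanism M W) (hφ : InterimStableAt φ ψ) (P₀ : Profile M W)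
    (hP₀ : ψ P₀ ≠ 0) (m : M) (w : W) (hm : mrank P₀ m (some w) = 1)
    (hw : wrank P₀ w (some m) = 1) (μ : Matching M W) (hμ : μ ∈ (φ P₀).support) :
    μ.partnerM m = some w := by
  by_contra hne
  have hpm : (pairMatching m w).partnerM m = some w := by
    simp [Matching.partnerM, pairMatching]
  have hpw := (partner_iff _ _ _).1 hpm
  have hne' : μ.partnerW w ≠ some m := fun h => hne ((partner_iff _ _ _).2 h)
  set A : Set (M ⊕ W) := {Sum.inl m, Sum.inr w} with hA
  have pair1 : ∀ a ∈ A, prank P₀ (pairMatching m w) a = 1 := by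
    rintro a (rfl | rfl)
    · simp only [prank, hpm, hm]
    · simp only [prank, hpw, hw]
  have mu1 : ∀ a ∈ A, ¬ prank P₀ μ a ≤ 1 := by
    rintro a (rfl | rfl) h
    · apply hne
      apply (P₀.mpref m).injective
      apply Fin.ext
      simp only [prank, mrank] at h hm
      omega
    · apply hne'
      apply (P₀.wpref w).injective
      apply Fin.ext
      simp only [prank, wrank] at h hw
      omega
  have empt : ∀ P : Profile M W, ∀ a, prank P emptyMatching a = urank P a := by
    intro P a
    cases a <;> rfl
  set φ' : Mechanism M W := fun P =>
    if ∀ a ∈ A, prefEq P P₀ a then PMF.pure (pairMatching m w) else PMF.pure emptyMatching with hφ'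
  refine hφ A ⟨⟨Sum.inl m, by simp [hA]⟩, φ', fun a => {P | prefEq P P₀ a}, ?_, ?_, ?_, ?_⟩
  · intro a P P' h
    exact ⟨fun h' => prefEq_trans (prefEq_symm h) h', fun h' => prefEq_trans h h'⟩
  · intro a ha P
    simp only [hφ']
    split_ifs with h
    · apply prob_pure
      rcases ha with rfl | rfl <;> simp [pairMatching, hA]
    · exact prob_pure _ _ ha
  · intro a ha Pt
    constructor
    · intro hPt
      have hPt' : prefEq Pt P₀ a := hPt
      have hY : ∀ P ∈ interimEvent A (fun a => {P | prefEq P P₀ a}) a Pt,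
          ∀ a' ∈ A, prefEq P P₀ a' := by
        rintro P ⟨h1, h2⟩ a' ha'
        by_cases h : a' = a
        · subst h; exact prefEq_trans h1 hPt
        · exact h2 a' ha' h
      have hP₀Y : P₀ ∈ interimEvent A (fun a => {P | prefEq P P₀ a}) a Pt :=
        ⟨prefEq_symm hPt, fun a' _ _ => prefEq_refl _ _⟩
      generalize interimEvent A (fun a => {P | prefEq P P₀ a}) a Pt = Y at hY hP₀Y
      have hpos : 0 < prob ψ Y := (prob_pos_iff _ _).2 ⟨P₀, hP₀Y, hP₀⟩
      refine ⟨hpos, ?_⟩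
      have key : ∀ n, ∀ P ∈ Y, 1 ≤ n → cdfAt P (φ' P) a n = 1 := by
        intro n P hP hn
        have h := hY P hP
        simp only [hφ', if_pos h]
        apply prob_pure
        simp only [Set.mem_ofPred_eq]
        rw [prefEq_prank (h a ha), pair1 a ha]
        exact hn
      have mono : ∀ n P, Y.indicator (fun P' => ψ P' * cdfAt P' (φ P') a n) P ≤
          Y.indicator (fun P' => ψ P' * cdfAt P' (φ' P') a n) P := by
        intro n P
        by_cases hP : P ∈ Y
        · simp only [Set.indicator_of_mem hP]
          gcongr
          rcases Nat.eq_zero_or_pos n with rfl | hn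
          · rw [cdfAt_zero]; exact zero_le
          · rw [key n P hP hn]; exact prob_le_one _ _
        · simp [Set.indicator_of_notMem hP]
      refine SD_of_numer ψ Y φ φ' a hpos (fun n => ENNReal.tsum_le_tsum (mono n)) 1 ?_
      refine ENNReal.tsum_lt_tsum (i := P₀) (numer_ne_top ψ Y φ a 1) (mono 1) ?_
      simp only [Set.indicator_of_mem hP₀Y]
      rw [key 1 P₀ hP₀Y le_rfl]
      refine ENNReal.mul_lt_mul_right hP₀ (PMF.apply_ne_top _ _) ?_
      refine lt_of_le_of_ne (prob_le_one _ _) ?_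
      intro h
      exact mu1 a ha ((prob_eq_one_iff _ _).1 h hμ)
    · rintro ⟨hpos, -, n, hn⟩
      by_contra hPt
      have hPt' : ¬ prefEq Pt P₀ a := hPt
      revert hn
      have hY : ∀ P ∈ interimEvent A (fun a => {P | prefEq P P₀ a}) a Pt,
          ¬ ∀ a' ∈ A, prefEq P P₀ a' := by
        rintro P ⟨h1, h2⟩ h3
        exact hPt' (prefEq_trans (prefEq_symm h1) (h3 a ha))
      generalize interimEvent A (fun a => {P | prefEq P P₀ a}) a Pt = Y at hY hpos
      refine not_lt.mpr ?_
      refine ENNReal.div_le_div_right (ENNReal.tsum_le_tsum fun P => ?_) _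
      by_cases hP : P ∈ Y
      · simp only [Set.indicator_of_mem hP]
        by_cases h0 : ψ P = 0
        · simp [h0]
        gcongr
        simp only [hφ', if_neg (hY P hP)]
        by_cases h4 : 4 ≤ n
        · refine (prob_le_one _ _).trans_eq ?_
          refine Eq.symm ((prob_eq_one_iff _ _).2 ?_)
          intro μ _
          exact (prank_le hM hW P μ a).trans h4
        · refine le_of_eq_of_le (prob_pure_not _ _ ?_) zero_le
          simp only [Set.mem_ofPred_eq]
          rw [empt, (hψ P).1 h0 a]
          exact h4
      · simp [Set.indicator_of_notMem hP]
  · exact (prob_pos_iff _ _).2 ⟨P₀, fun a _ => prefEq_refl _ _, hP₀⟩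

/-- the preference listing the alternatives in the order `e 0, e 1, e 2, none`. -/
def prefOf {X : Type*} [Fintype X] (hX : Fintype.card X = 3) (e : Fin 3 ≃ X) :
    Option X ≃ Fin (Fintype.card X + 1) :=
  (e.symm.optionCongr.trans (finSuccEquivLast (n := 3)).symm).trans (finCongr (by rw [hX]))

lemma prefOf_some {X : Type*} [Fintype X] (hX : Fintype.card X = 3) (e : Fin 3 ≃ X) (x : X) :
    (prefOf hX e (some x) : ℕ) = e.symm x := by
  have h : prefOf hX e (some x) =
      finCongr (by rw [hX]) ((finSuccEquivLast (n := 3)).symm (some (e.symm x))) := rfl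
  rw [h, finSuccEquivLast_symm_some]
  simp

lemma prefOf_none {X : Type*} [Fintype X] (hX : Fintype.card X = 3) (e : Fin 3 ≃ X) :
    (prefOf hX e none : ℕ) = 3 := by
  have h : prefOf hX e none =
      finCongr (by rw [hX]) ((finSuccEquivLast (n := 3)).symm none) := rfl
  rw [h, finSuccEquivLast_symm_none]
  simp

lemma prefOf_inj {X : Type*} [Fintype X] (hX : Fintype.card X = 3) {e e' : Fin 3 ≃ X}
    (h : prefOf hX e = prefOf hX e') : e = e' := by
  have : e.symm = e'.symm := by
    ext x
    rw [← prefOf_some hX, ← prefOf_some hX, h]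
  rw [← Equiv.symm_symm e, this, Equiv.symm_symm]

lemma prefOf_surj {X : Type*} [Fintype X] (hX : Fintype.card X = 3)
    (q : Option X ≃ Fin (Fintype.card X + 1)) (hq : (q none : ℕ) = 3) :
    ∃ e, q = prefOf hX e := by
  have hlt : ∀ x, (q (some x) : ℕ) < 3 := by
    intro x
    have h1 := (q (some x)).isLt
    have h2 : (q (some x) : ℕ) ≠ q none := fun h => by
      have := q.injective (Fin.ext h)
      simp at this
    omega
  let f : X → Fin 3 := fun x => ⟨q (some x), hlt x⟩
  have hf : Function.Injective f := by
    intro x y h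
    have : (q (some x) : ℕ) = q (some y) := congrArg (fun k : Fin 3 => (k : ℕ)) h
    simpa using q.injective (Fin.ext this)
  have hb : Function.Bijective f :=
    (Fintype.bijective_iff_injective_and_card f).2 ⟨hf, by simp [hX]⟩
  refine ⟨(Equiv.ofBijective f hb).symm, ?_⟩
  ext o
  cases o with
  | none => rw [hq, prefOf_none]
  | some x => rw [prefOf_some]; rfl

/-- Rank orders by role. -/
def pm (k : Fin 3) : Equiv.Perm (Fin 3) :=
  if k = 0 then 1 else if k = 1 then Equiv.swap 1 2 else finRotate 3 * finRotate 3

lemma pm_check : ∀ κ ρ : Equiv.Perm (Fin 3),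
    (∀ k, (pm k).trans ρ = pm (κ k)) → (∀ k, (pm k).trans κ = pm (ρ k)) → κ = 1 ∧ ρ = 1 := by
  decide

/-- The test profiles. -/
def prof (hM : Fintype.card M = 3) (hW : Fintype.card W = 3)
    (i : (Fin 3 ≃ M) × (Fin 3 ≃ W)) : Profile M W where
  mpref m := prefOf hW ((pm (i.1.symm m)).trans i.2)
  wpref w := prefOf hM ((pm (i.2.symm w)).trans i.1)

lemma prof_inj (hM : Fintype.card M = 3) (hW : Fintype.card W = 3) :
    Function.Injective (prof (M := M) (W := W) hM hW) := by
  rintro ⟨σ, τ⟩ ⟨σ', τ'⟩ h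
  have h1 : ∀ m, (pm (σ.symm m)).trans τ = (pm (σ'.symm m)).trans τ' := fun m =>
    prefOf_inj hW (congrFun (congrArg Profile.mpref h) m)
  have h2 : ∀ w, (pm (τ.symm w)).trans σ = (pm (τ'.symm w)).trans σ' := fun w =>
    prefOf_inj hM (congrFun (congrArg Profile.wpref h) w)
  obtain ⟨h3, h4⟩ := pm_check (σ.trans σ'.symm) (τ.trans τ'.symm)
    (fun k => by
      have := h1 (σ k)
      rw [Equiv.symm_apply_apply] at this
      rw [← Equiv.trans_assoc, this, Equiv.trans_assoc]; simp)
    (fun k => by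
      have := h2 (τ k)
      rw [Equiv.symm_apply_apply] at this
      rw [← Equiv.trans_assoc, this, Equiv.trans_assoc]; simp)
  have e1 : σ = σ' := by
    ext k
    have := congrArg (fun e => σ' (e k)) h3
    simpa using this
  have e2 : τ = τ' := by
    ext k
    have := congrArg (fun e => τ' (e k)) h4
    simpa using this
  rw [e1, e2]

lemma prof_urank (hM : Fintype.card M = 3) (hW : Fintype.card W = 3)
    (i : (Fin 3 ≃ M) × (Fin 3 ≃ W)) (a : M ⊕ W) : urank (prof hM hW i) a = 4 := by
  cases a <;> simp [urank, mrank, wrank, prof, prefOf_none]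

/-- the role of an agent -/
def role (i : (Fin 3 ≃ M) × (Fin 3 ≃ W)) : M ⊕ W → Fin 3
  | Sum.inl m => i.1.symm m
  | Sum.inr w => i.2.symm w

/-- the improved matching -/
def better (i : (Fin 3 ≃ M) × (Fin 3 ≃ W)) : Matching M W :=
  matchingOf ((i.1.symm.trans (Equiv.swap 0 1)).trans i.2)

/-- rank (from 1) obtained in `better` by role -/
def brank (k : Fin 3) : ℕ := if k = 0 then 2 else 1

/-- lower bound on the rank under a mechanism respecting mutual first choices -/
def arank (k : Fin 3) : ℕ := if k = 1 then 3 else 1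

lemma pm_brank : ∀ k, ((pm k).symm (Equiv.swap 0 1 k) : ℕ) + 1 = brank k := by decide

lemma prank_better (hM : Fintype.card M = 3) (hW : Fintype.card W = 3)
    (i : (Fin 3 ≃ M) × (Fin 3 ≃ W)) (a : M ⊕ W) :
    prank (prof hM hW i) (better i) a = brank (role i a) := by
  cases a with
  | inl m =>
    simp only [prank, mrank, role, better, Matching.partnerM, matchingOf, prof, prefOf_some]
    simp [pm_brank]
  | inr w =>
    simp only [prank, wrank, role, better, Matching.partnerW, matchingOf, prof, prefOf_some]
    simp [pm_brank]

lemma perm_third : ∀ k j : Fin 3, k = 1 → j ≠ 0 → j ≠ 2 → 3 ≤ ((pm k).symm j : ℕ) + 1 := by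
  decide

/-- In a matching of a test profile in which roles 0-0 and 2-2 are matched, role 1 agents get
rank at least 3. -/
lemma arank_le (hM : Fintype.card M = 3) (hW : Fintype.card W = 3)
    (i : (Fin 3 ≃ M) × (Fin 3 ≃ W)) (a : M ⊕ W) (μ : Matching M W)
    (h0 : μ.partnerM (i.1 0) = some (i.2 0)) (h2 : μ.partnerM (i.1 2) = some (i.2 2)) :
    arank (role i a) ≤ prank (prof hM hW i) μ a := by
  by_cases hr : role i a = 1
  swap
  · simp only [arank, if_neg hr]; exact prank_pos _ _ _
  simp only [arank, if_pos hr]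
  cases a with
  | inl m =>
    simp only [role] at hr
    simp only [prank, mrank]
    cases hp : μ.partnerM m with
    | none => simp [prof, prefOf_none]
    | some w =>
      simp only [prof, prefOf_some]
      have hw := (partner_iff _ _ _).1 hp
      refine perm_third _ (i.2.symm w) hr ?_ ?_
      · intro h
        have hw' : i.2 0 = w := by rw [← h]; simp
        have h0' := (partner_iff _ _ _).1 h0
        rw [hw', hw] at h0'
        have : m = i.1 0 := by simpa using h0'
        rw [this] at hr; simp at hr
      · intro h
        have hw' : i.2 2 = w := by rw [← h]; simp
        have h0' := (partner_iff _ _ _).1 h2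
        rw [hw', hw] at h0'
        have : m = i.1 2 := by simpa using h0'
        rw [this] at hr; simp at hr
  | inr w =>
    simp only [role] at hr
    simp only [prank, wrank]
    cases hp : μ.partnerW w with
    | none => simp [prof, prefOf_none]
    | some m =>
      simp only [prof, prefOf_some]
      have hw := (partner_iff _ _ _).2 hp
      refine perm_third _ (i.1.symm m) hr ?_ ?_
      · intro h
        have hw' : i.1 0 = m := by rw [← h]; simp
        rw [hw', hw] at h0
        have : w = i.2 0 := by simpa using h0
        rw [this] at hr; simp at hr
      · intro h
        have hw' : i.1 2 = m := by rw [← h]; simp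
        rw [hw', hw] at h2
        have : w = i.2 2 := by simpa using h2
        rw [this] at hr; simp at hr

/-- Swapping roles 0 and 1 while keeping the preference of the agent. -/
def flip {X Z : Type*} (x : X) (i : (Fin 3 ≃ X) × (Fin 3 ≃ Z)) : (Fin 3 ≃ X) × (Fin 3 ≃ Z) :=
  ((Equiv.swap 0 1).trans i.1,
    ((pm (Equiv.swap 0 1 (i.1.symm x))).symm.trans (pm (i.1.symm x))).trans i.2)

lemma flip_invol {X Z : Type*} (x : X) : Function.Involutive (flip (X := X) (Z := Z) x) := by
  rintro ⟨σ, τ⟩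
  simp only [flip]
  ext k <;> simp

lemma exists_flip (hM : Fintype.card M = 3) (hW : Fintype.card W = 3) (a : M ⊕ W)
    (Pt : Profile M W) (hPt : urank Pt a = 4) :
    (∃ s : Equiv.Perm ((Fin 3 ≃ M) × (Fin 3 ≃ W)), ∀ i,
      (prefEq (prof hM hW (s i)) Pt a ↔ prefEq (prof hM hW i) Pt a) ∧
      role (s i) a = Equiv.swap 0 1 (role i a)) ∧
    ∃ i, prefEq (prof hM hW i) Pt a ∧ role i a = 1 := by
  have eM : Fin 3 ≃ M := (Fintype.equivFinOfCardEq hM).symm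
  have eW : Fin 3 ≃ W := (Fintype.equivFinOfCardEq hW).symm
  cases a with
  | inl m =>
    constructor
    · refine ⟨(flip_invol m).toPerm, fun i => ⟨?_, ?_⟩⟩
      · have : (prof hM hW (flip m i)).mpref m = (prof hM hW i).mpref m := by
          simp only [prof, flip]
          congr 1
          ext k; simp
        simp only [prefEq, Function.Involutive.coe_toPerm, this]
      · simp [role, flip]
    · obtain ⟨e, he⟩ := prefOf_surj hW (Pt.mpref m) (by simpa [urank, mrank] using hPt)
      refine ⟨((Equiv.swap 1 (eM.symm m)).trans eM, (pm 1).symm.trans e), ?_, ?_⟩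
      · simp only [prefEq, he, prof]
        congr 1
        ext k; simp
      · simp [role]
  | inr w =>
    constructor
    · refine ⟨((Equiv.prodComm _ _).trans (flip_invol w).toPerm).trans (Equiv.prodComm _ _),
        fun i => ⟨?_, ?_⟩⟩
      · have : (prof hM hW (flip w i.swap).swap).wpref w = (prof hM hW i).wpref w := by
          simp only [prof, flip]
          congr 1
          ext k; simp
        simp only [prefEq, Equiv.trans_apply, Function.Involutive.coe_toPerm,
          Equiv.prodComm_apply, this]
      · simp [role, flip]
    · obtain ⟨e, he⟩ := prefOf_surj hM (Pt.wpref w) (by simpa [urank, wrank] using hPt)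
      refine ⟨((pm 1).symm.trans e, (Equiv.swap 1 (eW.symm w)).trans eW), ?_, ?_⟩
      · simp only [prefEq, he, prof]
        congr 1
        ext k; simp
      · simp [role]

lemma rank_swap : ∀ k : Fin 3, brank (Equiv.swap 0 1 k) ≤ arank k := by decide

end helpers

/-- With three men and three women and `ψ` the uniform prior over
the `(3!)^6 = 46656` preference profiles in which every agent ranks being unmatched
last, no mechanism is interim stable at `ψ`. -/
theorem no_mechanism_interimStable_at_uniform (M W : Type*)
    [Fintype M] [DecidableEq M] [Fintype W] [DecidableEq W]
    (hM : Fintype.card M = 3) (hW : Fintype.card W = 3)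
    (ψ : PMF (Profile M W))
    (hψ : ∀ P : Profile M W,
      ψ P = if ∀ a : M ⊕ W, urank P a = 4 then (46656 : ℝ≥0∞)⁻¹ else 0)
    (φ : Mechanism M W) :
    ¬ InterimStableAt φ ψ := by
  intro hφ
  have hψ0 : ∀ P, ψ P ≠ 0 ↔ ∀ a : M ⊕ W, urank P a = 4 := by
    intro P
    rw [hψ P]
    split_ifs with h
    · exact ⟨fun _ => h, fun _ => by simp⟩
    · exact ⟨fun h' => absurd rfl h', fun h' => absurd h' h⟩
  classical
  have hprof : ∀ i, ψ (prof hM hW i) ≠ 0 := fun i => (hψ0 _).2 (prof_urank hM hW i)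
  have hc : ∀ i, ψ (prof hM hW i) = (46656 : ℝ≥0∞)⁻¹ := by
    intro i
    rw [hψ, if_pos (prof_urank hM hW i)]
  have hforce : ∀ i, ∀ μ ∈ (φ (prof hM hW i)).support, ∀ a,
      arank (role i a) ≤ prank (prof hM hW i) μ a := by
    intro i μ hμ a
    apply arank_le
    · refine toptop hM hW ψ hψ0 φ hφ _ (hprof i) _ _ ?_ ?_ μ hμ <;>
        simp [mrank, wrank, prof, prefOf_some] <;> decide
    · refine toptop hM hW ψ hψ0 φ hφ _ (hprof i) _ _ ?_ ?_ μ hμ <;>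
        simp [mrank, wrank, prof, prefOf_some] <;> decide
  set φ' : Mechanism M W := fun P =>
    if h : ∃ i, prof hM hW i = P then PMF.pure (better h.choose) else φ P with hφ'
  have hφ'1 : ∀ i, φ' (prof hM hW i) = PMF.pure (better i) := by
    intro i
    have h : ∃ j, prof hM hW j = prof hM hW i := ⟨i, rfl⟩
    simp only [hφ', dif_pos h]
    rw [prof_inj hM hW h.choose_spec]
  have hφ'2 : ∀ P, P ∉ Set.range (prof hM hW) → φ' P = φ P := by
    intro P hP
    exact dif_neg hP
  have i₀ : (Fin 3 ≃ M) × (Fin 3 ≃ W) :=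
    ((Fintype.equivFinOfCardEq hM).symm, (Fintype.equivFinOfCardEq hW).symm)
  have hcdf' : ∀ i a n, cdfAt (prof hM hW i) (φ' (prof hM hW i)) a n =
      if brank (role i a) ≤ n then 1 else 0 := by
    intro i a n
    rw [hφ'1]
    split_ifs with h
    · apply prob_pure; simpa [prank_better] using h
    · apply prob_pure_not; simpa [prank_better] using h
  have hcdf : ∀ i a n, cdfAt (prof hM hW i) (φ (prof hM hW i)) a n ≤
      if arank (role i a) ≤ n then 1 else 0 := by
    intro i a n
    split_ifs with h
    · exact prob_le_one _ _
    · refine le_of_eq (prob_eq_zero _ _ ?_)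
      intro μ hμ h'
      exact h ((hforce i μ hμ a).trans h')
  refine hφ Set.univ ⟨⟨Sum.inl (i₀.1 0), trivial⟩, φ', fun a => {P | urank P a = 4}, ?_, ?_, ?_, ?_⟩
  · intro a P P' h
    simp only [Set.mem_ofPred_eq, prefEq_urank h]
  · intro a _ P
    rw [prob_eq_one_iff]
    intro μ _
    trivial
  · intro a _ Pt
    constructor
    swap
    · rintro ⟨hpos, -⟩
      obtain ⟨P, hP, hP0⟩ := (prob_pos_iff _ _).1 hpos
      have := (hψ0 P).1 hP0 a
      rwa [prefEq_urank hP.1] at this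
    · intro hPt
      obtain ⟨⟨s, hs⟩, i₁, hi₁, hr₁⟩ := exists_flip hM hW a Pt hPt
      have hY : ∀ i, prof hM hW i ∈ interimEvent Set.univ (fun a => {P | urank P a = 4}) a Pt ↔
          prefEq (prof hM hW i) Pt a :=
        fun i => ⟨fun h => h.1, fun h => ⟨h, fun a' _ _ => prof_urank hM hW i a'⟩⟩
      generalize interimEvent Set.univ (fun a => {P | urank P a = 4}) a Pt = Y at hY
      have hpos : 0 < prob ψ Y :=
        (prob_pos_iff _ _).2 ⟨_, (hY i₁).2 hi₁, hprof i₁⟩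
      have hsplit : ∀ (χ : Mechanism M W) n, numer ψ Y χ a n =
          (∑' i, Y.indicator (fun P => ψ P * cdfAt P (χ P) a n) (prof hM hW i)) +
          ∑' P : ((Set.range (prof hM hW))ᶜ : Set (Profile M W)),
            Y.indicator (fun P => ψ P * cdfAt P (χ P) a n) P := by
        intro χ n
        rw [← tsum_range (fun P => Y.indicator (fun P => ψ P * cdfAt P (χ P) a n) P)
          (prof_inj hM hW)]
        exact (Summable.tsum_add_tsum_compl ENNReal.summable ENNReal.summable).symm
      have hcompl : ∀ n, (∑' P : ((Set.range (prof hM hW))ᶜ : Set (Profile M W)),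
            Y.indicator (fun P => ψ P * cdfAt P (φ' P) a n) P) =
          ∑' P : ((Set.range (prof hM hW))ᶜ : Set (Profile M W)),
            Y.indicator (fun P => ψ P * cdfAt P (φ P) a n) P := by
        intro n
        refine tsum_congr fun P => ?_
        simp only [Set.indicator, hφ'2 P.1 P.2]
      have hre : ∀ n, (∑' i, Y.indicator (fun P => ψ P * cdfAt P (φ' P) a n) (prof hM hW i)) =
          ∑' i, Y.indicator (fun P => ψ P * cdfAt P (φ' P) a n) (prof hM hW (s i)) := by
        intro n
        exact (Equiv.tsum_eq s
          (fun i => Y.indicator (fun P => ψ P * cdfAt P (φ' P) a n) (prof hM hW i))).symm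
      have hval : ∀ n i, Y.indicator (fun P => ψ P * cdfAt P (φ' P) a n) (prof hM hW (s i)) =
          Y.indicator (fun P => ψ P *
            if brank (Equiv.swap 0 1 (role i a)) ≤ n then 1 else 0) (prof hM hW i) := by
        intro n i
        simp only [Set.indicator, hY, (hs i).1, hcdf', (hs i).2, hc]
      have hle : ∀ n i, Y.indicator (fun P => ψ P * cdfAt P (φ P) a n) (prof hM hW i) ≤
          Y.indicator (fun P => ψ P * cdfAt P (φ' P) a n) (prof hM hW (s i)) := by
        intro n i
        rw [hval]
        by_cases h : prof hM hW i ∈ Y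
        · simp only [Set.indicator_of_mem h]
          gcongr
          refine (hcdf i a n).trans ?_
          have := rank_swap (role i a)
          split_ifs with h1 h2
          · exact le_rfl
          · omega
          · exact zero_le
          · exact le_rfl
        · simp [Set.indicator_of_notMem h]
      have hfin : ∀ n, (∑' i, Y.indicator (fun P => ψ P * cdfAt P (φ P) a n) (prof hM hW i)) ≠ ⊤ ∧
          (∑' P : ((Set.range (prof hM hW))ᶜ : Set (Profile M W)),
            Y.indicator (fun P => ψ P * cdfAt P (φ P) a n) P) ≠ ⊤ := by
        intro n
        have := numer_ne_top ψ Y φ a n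
        rw [hsplit] at this
        exact ENNReal.add_ne_top.1 this
      refine ⟨hpos, SD_of_numer ψ Y φ φ' a hpos ?_ 2 ?_⟩
      · intro n
        rw [hsplit, hsplit, hcompl, hre]
        gcongr ?_ + _
        exact ENNReal.tsum_le_tsum (hle n)
      · rw [hsplit, hsplit, hcompl, hre]
        refine ENNReal.add_lt_add_right (hfin 2).2 ?_
        refine ENNReal.tsum_lt_tsum (i := i₁) (hfin 2).1 (hle 2) ?_
        rw [hval]
        have h := (hY i₁).2 hi₁
        simp only [Set.indicator_of_mem h]
        refine ENNReal.mul_lt_mul_right (hprof i₁) (PMF.apply_ne_top _ _) ?_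
        refine lt_of_le_of_lt (hcdf i₁ a 2) ?_
        rw [hr₁]
        simp [arank, brank]
  · exact (prob_pos_iff _ _).2 ⟨prof hM hW i₀, fun a _ => prof_urank hM hW i₀ a, hprof i₀⟩

end Unraveling
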